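/- Let (G,C) be a strongly connected inhomogeneous Mauldin–Williams graph in ℝ^d satisfying the SOSC with open sets (U_i)_{i∈V} and condensation sets (C_i)_{i∈V} such that ∫₀^∞ e^{−s₀(G)t} N_{e^{−t}}(C_i) dt < ∞ for all i ∈ V. Then ∫₀^∞ e^{−s₀(G)t} N_{e^{−t}}(K_i^C ∩ [∂U_i]_{e^{−t}}) dt < ∞ for all i ∈ V. -/

import Mathlib

open Set Filter Topology MeasureTheory Metric

noncomputable section

/-- Points of `ℝ^d`. -/
abbrev Pt (d : ℕ) := EuclideanSpace ℝ (Fin d)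

/-- The `r`-covering number of `A ⊆ ℝ^d`: the least number of closed balls of
radius `r` needed to cover `A`. -/
noncomputable def coveringNumber {d : ℕ} (A : Set (Pt d)) (r : ℝ) : ℕ :=
  sInf {k : ℕ | ∃ c : Fin k → Pt d, A ⊆ ⋃ i, Metric.closedBall (c i) r}

/-- A Mauldin–Williams graph in `ℝ^d` over a finite directed multigraph with
vertex type `V` and edge type `E`: each vertex `i` carries a non-empty compact
set `X i` equal to the closure of its interior, and each edge `e` carries a
contractive similarity `S e` of ratio `r e ∈ (0,1)` mapping `X (term e)` into
`X (init e)`. -/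
structure MWGraph (d : ℕ) (V E : Type) [Fintype V] [Fintype E] where
  init : E → V
  term : E → V
  X : V → Set (Pt d)
  S : E → Pt d → Pt d
  r : E → ℝ
  X_nonempty : ∀ i, (X i).Nonempty
  X_compact : ∀ i, IsCompact (X i)
  X_regular : ∀ i, closure (interior (X i)) = X i
  r_pos : ∀ e, 0 < r e
  r_lt_one : ∀ e, r e < 1
  S_maps : ∀ e, Set.MapsTo (S e) (X (term e)) (X (init e))
  S_sim : ∀ e x y, dist (S e x) (S e y) = r e * dist x y

namespace MWGraph

variable {d : ℕ} {V E : Type} [Fintype V] [Fintype E]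

variable (G : MWGraph d V E)

/-- `G.IsPathFrom j γ` holds iff the list of edges `γ` is a directed path
starting at vertex `j`. -/
def IsPathFrom : V → List E → Prop
  | _, [] => True
  | j, e :: es => G.init e = j ∧ IsPathFrom (G.term e) es

/-- Terminal vertex of the path `γ` starting at `j`. -/
def pathTerm : V → List E → V
  | j, [] => j
  | _, e :: es => pathTerm (G.term e) es

/-- `S_γ = S_{e₁} ∘ ⋯ ∘ S_{eₙ}` (with `S_∅ = id`). -/
def pathMap : List E → Pt d → Pt d
  | [] => id
  | e :: es => G.S e ∘ pathMap es

/-- `r_γ = r_{e₁} ⋯ r_{eₙ}` (with `r_∅ = 1`). -/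
def pathRatio (γ : List E) : ℝ := (γ.map G.r).prod

/-- The underlying multigraph is strongly connected: for every ordered pair of
vertices there is a (non-empty) directed path from the first to the second. -/
def StronglyConnected : Prop :=
  ∀ i j : V, ∃ γ : List E, γ ≠ [] ∧ G.IsPathFrom i γ ∧ G.pathTerm i γ = j

/-- `K` is the list of graph-directed self-similar sets of `G`: the unique list
of non-empty compact sets with `K i = ⋃_{e ∈ E_i} S_e (K (term e))`. -/
def IsAttractor (K : V → Set (Pt d)) : Prop :=
  (∀ i, IsCompact (K i)) ∧ (∀ i, (K i).Nonempty) ∧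
    ∀ i, K i = ⋃ e ∈ {e : E | G.init e = i}, G.S e '' K (G.term e)

/-- `C` is an admissible list of condensation sets: compact subsets of the `X i`. -/
def IsCondensation (C : V → Set (Pt d)) : Prop :=
  ∀ i, IsCompact (C i) ∧ C i ⊆ G.X i

/-- `K` is the list of inhomogeneous graph-directed self-similar sets of `(G, C)`:
the unique list of non-empty compact sets with
`K i = ⋃_{e ∈ E_i} S_e (K (term e)) ∪ C i`. -/
def IsInhomAttractor (C : V → Set (Pt d)) (K : V → Set (Pt d)) : Prop :=
  (∀ i, IsCompact (K i)) ∧ (∀ i, (K i).Nonempty) ∧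
    ∀ i, K i = (⋃ e ∈ {e : E | G.init e = i}, G.S e '' K (G.term e)) ∪ C i

/-- `G` satisfies the open set condition with the open sets `U`. -/
def IsOSCWith (U : V → Set (Pt d)) : Prop :=
  (∀ i, (U i).Nonempty) ∧ (∀ i, IsOpen (U i)) ∧ (∀ i, Bornology.IsBounded (U i)) ∧
    (∀ i, U i ⊆ G.X i) ∧
    (∀ i, (⋃ e ∈ {e : E | G.init e = i}, G.S e '' U (G.term e)) ⊆ U i) ∧
    ∀ e e' : E, G.init e = G.init e' → e ≠ e' →
      Disjoint (G.S e '' U (G.term e)) (G.S e' '' U (G.term e'))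

/-- The set `{-log r_γ : γ a directed cycle of G}`. -/
def cycleSet : Set ℝ :=
  {x : ℝ | ∃ (j : V) (γ : List E), γ ≠ [] ∧ G.IsPathFrom j γ ∧ G.pathTerm j γ = j ∧
    x = -Real.log (G.pathRatio γ)}

/-- `G_M`, the smallest closed additive subgroup of `ℝ` containing
`{-log r_γ : γ a directed cycle}`. -/
def GM : Set ℝ := closure ((AddSubgroup.closure (G.cycleSet) : AddSubgroup ℝ) : Set ℝ)

variable [DecidableEq V]

/-- The matrix `A_G^s` with entries `(A_G^s)_{ij} = Σ_{e ∈ E_{ij}} r_e^s`. -/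
def Amatrix (s : ℝ) : Matrix V V ℝ :=
  Matrix.of fun i j => ∑ e : E, if G.init e = i ∧ G.term e = j then G.r e ^ s else 0

end MWGraph

/-- Spectral radius of a real square matrix: the largest modulus of a complex
eigenvalue. -/
noncomputable def matrixSpectralRadius {n : Type} [Fintype n] [DecidableEq n]
    (A : Matrix n n ℝ) : ℝ :=
  sSup {x : ℝ | ∃ μ : ℂ, μ ∈ spectrum ℂ (A.map (fun a : ℝ => (a : ℂ))) ∧ x = ‖μ‖}

/-- `s` is the (unique) exponent `s ≥ 0` with `ρ(A_G^s) = 1`, i.e. `s = s₀(G)`. -/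
def IsS0 {d : ℕ} {V E : Type} [Fintype V] [Fintype E] [DecidableEq V]
    (G : MWGraph d V E) (s : ℝ) : Prop :=
  0 ≤ s ∧ matrixSpectralRadius (G.Amatrix s) = 1

section Covering

variable {d : ℕ}

lemma coveringNumber_le_of_cover {A : Set (Pt d)} {r : ℝ} {ι : Type*} [Fintype ι]
    (c : ι → Pt d) (h : A ⊆ ⋃ i, Metric.closedBall (c i) r) :
    coveringNumber A r ≤ Fintype.card ι := by
  refine Nat.sInf_le ⟨c ∘ (Fintype.equivFin ι).symm, fun x hx => ?_⟩
  obtain ⟨i, hi⟩ := mem_iUnion.1 (h hx)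
  exact mem_iUnion.2 ⟨Fintype.equivFin ι i, by simpa using hi⟩

lemma exists_cover_coveringNumber {A : Set (Pt d)} (hA : Bornology.IsBounded A) {r : ℝ}
    (hr : 0 < r) :
    ∃ c : Fin (coveringNumber A r) → Pt d, A ⊆ ⋃ i, Metric.closedBall (c i) r := by
  refine Nat.sInf_mem
    (s := {k : ℕ | ∃ c : Fin k → Pt d, A ⊆ ⋃ i, Metric.closedBall (c i) r}) ?_
  obtain ⟨s, hs, hAs⟩ := Metric.totallyBounded_iff.1
    (hA.isCompact_closure.totallyBounded.subset subset_closure) r hr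
  have := hs.fintype
  refine ⟨Fintype.card s, fun i => ((Fintype.equivFin s).symm i : Pt d), fun x hx => ?_⟩
  obtain ⟨y, hy, hxy⟩ := mem_iUnion₂.1 (hAs hx)
  exact mem_iUnion.2 ⟨Fintype.equivFin s ⟨y, hy⟩, by simpa using (Metric.mem_ball.1 hxy).le⟩

lemma coveringNumber_anti {A : Set (Pt d)} (hA : Bornology.IsBounded A) {r r' : ℝ}
    (hr : 0 < r) (h : r ≤ r') : coveringNumber A r' ≤ coveringNumber A r := by
  obtain ⟨c, hc⟩ := exists_cover_coveringNumber hA hr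
  simpa using coveringNumber_le_of_cover c
    (hc.trans (iUnion_mono fun i => Metric.closedBall_subset_closedBall h))

lemma coveringNumber_mono {A B : Set (Pt d)} (hB : Bornology.IsBounded B) {r : ℝ}
    (hr : 0 < r) (h : A ⊆ B) : coveringNumber A r ≤ coveringNumber B r := by
  obtain ⟨c, hc⟩ := exists_cover_coveringNumber hB hr
  simpa using coveringNumber_le_of_cover c (h.trans hc)

lemma coveringNumber_union_le {A B : Set (Pt d)} (hA : Bornology.IsBounded A)
    (hB : Bornology.IsBounded B) {r : ℝ} (hr : 0 < r) :
    coveringNumber (A ∪ B) r ≤ coveringNumber A r + coveringNumber B r := by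
  obtain ⟨a, ha⟩ := exists_cover_coveringNumber hA hr
  obtain ⟨b, hb⟩ := exists_cover_coveringNumber hB hr
  simpa using coveringNumber_le_of_cover (Sum.elim a b) (A := A ∪ B) (r := r) (by
    rw [iUnion_sum]
    exact union_subset_union ha hb)

lemma coveringNumber_biUnion_le {ι : Type*} (s : Finset ι) (A : ι → Set (Pt d))
    (hA : ∀ i ∈ s, Bornology.IsBounded (A i)) {r : ℝ} (hr : 0 < r) :
    coveringNumber (⋃ i ∈ s, A i) r ≤ ∑ i ∈ s, coveringNumber (A i) r := by
  classical
  induction s using Finset.induction_on with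
  | empty =>
    simpa using coveringNumber_le_of_cover (ι := Empty) (A := (∅ : Set (Pt d))) (r := r)
      Empty.elim (empty_subset _)
  | insert a s ha ih =>
    rw [Finset.set_biUnion_insert, Finset.sum_insert ha]
    refine (coveringNumber_union_le (hA a (by simp)) ?_ hr).trans ?_
    · exact (Bornology.isBounded_biUnion_finset s).2 fun i hi => hA i (by simp [hi])
    · exact Nat.add_le_add_left (ih fun i hi => hA i (by simp [hi])) _

/-- Covers are transported by maps that contract distances by the factor `ρ`. -/
lemma coveringNumber_image_le {A : Set (Pt d)} (hA : Bornology.IsBounded A)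
    {f : Pt d → Pt d} {ρ : ℝ} (hρ : 0 < ρ) (hf : ∀ x y, dist (f x) (f y) = ρ * dist x y)
    {r : ℝ} (hr : 0 < r) : coveringNumber (f '' A) (ρ * r) ≤ coveringNumber A r := by
  obtain ⟨c, hc⟩ := exists_cover_coveringNumber hA hr
  refine (coveringNumber_le_of_cover (f ∘ c) ?_).trans (by simp)
  rintro _ ⟨x, hx, rfl⟩
  obtain ⟨i, hi⟩ := mem_iUnion.1 (hc hx)
  refine mem_iUnion.2 ⟨i, ?_⟩
  rw [Metric.mem_closedBall, Function.comp, hf]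
  exact mul_le_mul_of_nonneg_left hi hρ.le

lemma measurable_coveringNumber_exp_neg {A : Set (Pt d)} (hA : Bornology.IsBounded A) :
    Measurable fun t : ℝ => coveringNumber A (Real.exp (-t)) :=
  Monotone.measurable fun _ _ h =>
    coveringNumber_anti hA (Real.exp_pos _) (Real.exp_le_exp.2 (neg_le_neg h))

end Covering

section Similarity

/-- A similarity of a finite-dimensional Euclidean space is onto. -/
lemma surjective_of_dist_eq_mul {d : ℕ} {f : Pt d → Pt d} {ρ : ℝ} (hρ : 0 < ρ)
    (hf : ∀ x y, dist (f x) (f y) = ρ * dist x y) : Function.Surjective f := by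
  have hiso : Isometry fun x => ρ⁻¹ • f x := Isometry.of_dist_eq fun x y => by
    rw [dist_smul₀, hf, Real.norm_of_nonneg (inv_nonneg.2 hρ.le), inv_mul_cancel_left₀ hρ.ne']
  have hsurj : Function.Surjective fun x => ρ⁻¹ • f x :=
    (hiso.affineIsometryOfStrictConvexSpace.linearIsometry.toLinearIsometryEquiv rfl).surjective
      |> fun h => (AffineMap.linear_surjective_iff
        hiso.affineIsometryOfStrictConvexSpace.toAffineMap).1 h
  intro y
  obtain ⟨x, hx⟩ := hsurj (ρ⁻¹ • y)
  exact ⟨x, smul_right_injective _ (inv_ne_zero hρ.ne') hx⟩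

end Similarity

section Frontier

/-- A segment from the closure of an open set to its complement crosses the frontier. -/
lemma exists_mem_frontier_dist_le {E : Type*} [NormedAddCommGroup E] [NormedSpace ℝ E]
    {U : Set E} {y w : E} (hy : y ∈ closure U) (hw : w ∉ U) :
    ∃ p ∈ frontier U, dist y p ≤ dist y w := by
  have hseg : IsPreconnected (segment ℝ y w) := (convex_segment y w).isPreconnected
  obtain ⟨p, hp, hpU⟩ : (segment ℝ y w ∩ frontier U).Nonempty := by
    by_contra hne
    have hcov : segment ℝ y w ⊆ interior U ∪ (closure U)ᶜ := fun p hp => by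
      by_contra hpn
      rw [mem_union, not_or, mem_compl_iff, not_not] at hpn
      exact hne ⟨p, hp, hpn.2, hpn.1⟩
    obtain ⟨p, -, hpi, hpc⟩ := hseg _ _ isOpen_interior isClosed_closure.isOpen_compl hcov
      ⟨y, left_mem_segment ℝ y w, (hcov (left_mem_segment ℝ y w)).resolve_right (· hy)⟩
      ⟨w, right_mem_segment ℝ y w, (hcov (right_mem_segment ℝ y w)).resolve_left
        fun h => hw (interior_subset h)⟩
    exact hpc (subset_closure (interior_subset hpi))
  refine ⟨p, hpU, ?_⟩
  have := dist_add_dist_of_mem_segment hp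
  linarith [dist_nonneg (x := p) (y := w)]

end Frontier

section Perron

open scoped Matrix.Norms.Operator NNReal ENNReal

variable {V : Type} [Fintype V] [DecidableEq V]

lemma norm_le_one_of_mem_spectrum {A : Matrix V V ℝ} (hρ : matrixSpectralRadius A ≤ 1) {μ : ℂ}
    (hμ : μ ∈ spectrum ℂ (A.map (fun a : ℝ => (a : ℂ)))) : ‖μ‖ ≤ 1 := by
  refine le_trans (b := matrixSpectralRadius A) (le_csSup ?_ ⟨μ, hμ, rfl⟩) hρ
  obtain ⟨R, hR⟩ := (spectrum.isBounded (𝕜 := ℂ) (A.map (fun a : ℝ => (a : ℂ)))).exists_norm_le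
  exact ⟨R, by rintro _ ⟨ν, hν, rfl⟩; exact hR ν hν⟩

/-- If the spectral radius is at most one, some positive power of `A` has row sums at most `b ^ k`,
for any `b > 1`. -/
lemma exists_sum_row_pow_le {A : Matrix V V ℝ} (hρ : matrixSpectralRadius A ≤ 1) {b : ℝ}
    (hb : 1 < b) : ∃ k : ℕ, k ≠ 0 ∧ ∀ i, ((A ^ k).mulVec 1) i ≤ b ^ k := by
  set M : Matrix V V ℂ := A.map (fun a : ℝ => (a : ℂ)) with hM
  have : CompleteSpace (Matrix V V ℂ) := FiniteDimensional.complete ℂ _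
  have hrad : spectralRadius ℂ M < ENNReal.ofReal b := by
    refine lt_of_le_of_lt (b := 1) (iSup₂_le fun μ hμ => ?_) (by simpa using hb)
    exact_mod_cast norm_le_one_of_mem_spectrum hρ hμ
  obtain ⟨k, hk, hk0⟩ := (((spectrum.pow_norm_pow_one_div_tendsto_nhds_spectralRadius M).eventually
    (gt_mem_nhds hrad)).and (eventually_ne_atTop 0)).exists
  refine ⟨k, hk0, fun i => ?_⟩
  have hk' : ‖M ^ k‖ ≤ b ^ k := by
    have h1 := (ENNReal.ofReal_lt_ofReal_iff (by linarith)).1 hk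
    have h2 := pow_le_pow_left₀ (by positivity) h1.le k
    rwa [one_div, Real.rpow_inv_natCast_pow (norm_nonneg _) hk0] at h2
  have hMk : M ^ k = (A ^ k).map (fun a : ℝ => (a : ℂ)) :=
    (map_pow (Complex.ofRealHom.mapMatrix (m := V)) A k).symm
  refine le_trans ?_ hk'
  calc ((A ^ k).mulVec 1) i = ∑ j, (A ^ k) i j := by simp [Matrix.mulVec, dotProduct]
    _ ≤ ∑ j, ‖(M ^ k) i j‖ := Finset.sum_le_sum fun j _ => by
        rw [hMk, Matrix.map_apply, Complex.norm_real]; exact le_abs_self _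
    _ ≤ ‖M ^ k‖ := by
        rw [Matrix.linfty_opNorm_def]
        have := Finset.le_sup (f := fun i => ∑ j, ‖(M ^ k) i j‖₊) (Finset.mem_univ i)
        simpa using NNReal.coe_le_coe.2 this

lemma exists_mulVec_le_smul [Nonempty V] {A : Matrix V V ℝ} (hA : ∀ i j, 0 ≤ A i j)
    (hρ : matrixSpectralRadius A ≤ 1) {b : ℝ} (hb : 1 < b) :
    ∃ v ∈ stdSimplex ℝ V, ∀ i, A.mulVec v i ≤ b * v i := by
  obtain ⟨k, hk0, hk⟩ := exists_sum_row_pow_le hρ hb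
  have hb0 : 0 < b := by linarith
  have hpow : ∀ m i, 0 ≤ ((A ^ m).mulVec 1) i := by
    intro m
    induction m with
    | zero => intro i; simp
    | succ m ih =>
      intro i
      rw [pow_succ', ← Matrix.mulVec_mulVec]
      exact Finset.sum_nonneg fun j _ => mul_nonneg (hA i j) (ih j)
  set w : V → ℝ := fun i => ∑ m ∈ Finset.range k, (b⁻¹) ^ m * ((A ^ m).mulVec 1) i with hw
  have hw1 : ∀ i, 1 ≤ w i := fun i => by
    have := Finset.single_le_sum (f := fun m => (b⁻¹) ^ m * ((A ^ m).mulVec 1) i)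
      (fun m _ => mul_nonneg (by positivity) (hpow m i))
      (Finset.mem_range.2 (Nat.pos_of_ne_zero hk0))
    simpa [hw] using this
  have hAw : ∀ i, A.mulVec w i ≤ b * w i := fun i => by
    have h1 : A.mulVec w i = ∑ m ∈ Finset.range k, (b⁻¹) ^ m * ((A ^ (m + 1)).mulVec 1) i := by
      simp only [hw, Matrix.mulVec, dotProduct, Finset.mul_sum]
      rw [Finset.sum_comm]
      refine Finset.sum_congr rfl fun m _ => ?_
      have : ((A ^ (m + 1)).mulVec 1) i = ∑ j, A i j * ((A ^ m).mulVec 1) j := by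
        rw [pow_succ', ← Matrix.mulVec_mulVec]; rfl
      simp only [Matrix.mulVec, dotProduct] at this
      rw [← Finset.mul_sum, this, Finset.mul_sum]
      simp only [Finset.mul_sum]
      exact Finset.sum_congr rfl fun j _ => Finset.sum_congr rfl fun l _ => by ring
    have h2 : A.mulVec w i = b * ∑ m ∈ Finset.range k,
        (b⁻¹) ^ (m + 1) * ((A ^ (m + 1)).mulVec 1) i := by
      rw [h1, Finset.mul_sum]
      refine Finset.sum_congr rfl fun m _ => ?_
      rw [pow_succ b⁻¹, ← mul_assoc, mul_comm b, mul_assoc (b⁻¹ ^ m),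
        inv_mul_cancel₀ hb0.ne', mul_one]
    rw [h2]
    refine mul_le_mul_of_nonneg_left ?_ hb0.le
    have h3 := Finset.sum_range_succ (fun m => (b⁻¹) ^ m * ((A ^ m).mulVec 1) i) k
    rw [Finset.sum_range_succ'] at h3
    have h4 : (b⁻¹) ^ k * ((A ^ k).mulVec 1) i ≤ 1 := by
      rw [inv_pow, inv_mul_le_iff₀ (by positivity), mul_one]
      exact hk i
    simp only [pow_zero, Matrix.one_mulVec, Pi.one_apply, mul_one] at h3
    simp only [hw]
    linarith
  have hs : 0 < ∑ i, w i := Finset.sum_pos (fun i _ => by linarith [hw1 i]) Finset.univ_nonempty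
  refine ⟨(∑ i, w i)⁻¹ • w, ⟨fun i => ?_, ?_⟩, fun i => ?_⟩
  · exact mul_nonneg (inv_nonneg.2 hs.le) (by linarith [hw1 i])
  · simp only [Pi.smul_apply, smul_eq_mul, ← Finset.mul_sum]
    exact inv_mul_cancel₀ hs.ne'
  · rw [Matrix.mulVec_smul, Pi.smul_apply, Pi.smul_apply, smul_eq_mul, smul_eq_mul,
      mul_left_comm]
    exact mul_le_mul_of_nonneg_left (hAw i) (inv_nonneg.2 hs.le)

/-- A nonnegative matrix of spectral radius at most one has a nonnegative, nonzero subinvariant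
vector. -/
lemma exists_mem_stdSimplex_mulVec_le [Nonempty V] {A : Matrix V V ℝ} (hA : ∀ i j, 0 ≤ A i j)
    (hρ : matrixSpectralRadius A ≤ 1) :
    ∃ v ∈ stdSimplex ℝ V, ∀ i, A.mulVec v i ≤ v i := by
  have hb : ∀ m : ℕ, (1 : ℝ) < 1 + 1 / ((m : ℝ) + 1) := fun m => by
    have : (0 : ℝ) < 1 / ((m : ℝ) + 1) := by positivity
    linarith
  choose v hv hAv using fun m : ℕ => exists_mulVec_le_smul hA hρ (hb m)
  obtain ⟨u, hu, φ, hφ, hlim⟩ := (isCompact_stdSimplex ℝ V).tendsto_subseq hv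
  refine ⟨u, hu, fun i => ?_⟩
  have hcont : Continuous fun x : V → ℝ => A.mulVec x i := by
    simp only [Matrix.mulVec, dotProduct]; fun_prop
  have h1 := (hcont.tendsto u).comp hlim
  have h2 : Tendsto (fun m => (1 + 1 / ((φ m : ℝ) + 1)) * v (φ m) i) atTop (𝓝 ((1 + 0) * u i)) :=
    ((tendsto_one_div_add_atTop_nhds_zero_nat.comp hφ.tendsto_atTop).const_add 1).mul
      ((tendsto_pi_nhds.1 hlim) i)
  simpa using le_of_tendsto_of_tendsto' h1 h2 fun m => hAv (φ m) i

end Perron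

section Renewal

open scoped ENNReal

/-- The `k`-th iterate of the renewal operator with source `h`, transitions `P`, `τ`, weights `p`,
delays `l` and threshold `t₀`. -/
def renewalIterate {V ι : Type*} (P : V → Finset ι) (τ : V → ι → V) (p : ι → ℝ≥0∞) (l : ι → ℝ)
    (t₀ : ℝ) (h : V → ℝ → ℝ≥0∞) : ℕ → V → ℝ → ℝ≥0∞
  | 0 => h
  | k + 1 => fun i t => h i t + ∑ γ ∈ P i,
      p γ * (Ioi t₀).indicator (fun t => renewalIterate P τ p l t₀ h k (τ i γ) (t - l γ)) t

lemma measurable_renewalIterate {V ι : Type*} (P : V → Finset ι) (τ : V → ι → V) (p : ι → ℝ≥0∞)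
    (l : ι → ℝ) (t₀ : ℝ) {h : V → ℝ → ℝ≥0∞} (hh : ∀ i, Measurable (h i)) (k : ℕ) (i : V) :
    Measurable (renewalIterate P τ p l t₀ h k i) := by
  induction k generalizing i with
  | zero => exact hh i
  | succ k ih =>
    refine (hh i).add (Finset.measurable_sum _ fun γ _ => Measurable.const_mul ?_ _)
    exact ((ih (τ i γ)).comp (measurable_id.sub_const _)).indicator measurableSet_Ioi

lemma setLIntegral_indicator_sub_le {g : ℝ → ℝ≥0∞} {l t₀ : ℝ}
    (hlt : l ≤ t₀) (ht : 0 ≤ t₀) :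
    ∫⁻ t in Ioi (0 : ℝ), (Ioi t₀).indicator (fun t => g (t - l)) t ≤ ∫⁻ t in Ioi (0 : ℝ), g t := by
  rw [← lintegral_indicator measurableSet_Ioi, ← lintegral_indicator measurableSet_Ioi,
    ← lintegral_sub_right_eq_self ((Ioi (0 : ℝ)).indicator g) l]
  refine lintegral_mono fun t => ?_
  by_cases h : t₀ < t
  · have h1 : (0 : ℝ) < t := ht.trans_lt h
    have h2 : 0 < t - l := by linarith
    simp [indicator, h, h1, h2]
  · by_cases h1 : 0 < t <;> simp [indicator, h, h1]

/-- A strictly subcritical renewal inequality with integrable source has integrable solutions. -/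
lemma lintegral_lt_top_of_renewal {V ι : Type*} [Fintype V] {P : V → Finset ι} {τ : V → ι → V}
    {p : ι → ℝ≥0∞} {l : ι → ℝ} {t₀ : ℝ} (ht₀ : 0 ≤ t₀) {c : ℝ} (hc : 0 < c)
    (hl : ∀ i, ∀ γ ∈ P i, c ≤ l γ ∧ l γ ≤ t₀)
    {φ h : V → ℝ → ℝ≥0∞} (hh : ∀ i, Measurable (h i))
    (hhint : ∀ i, ∫⁻ t in Ioi (0 : ℝ), h i t < ⊤)
    (hφ : ∀ i t, 0 < t → t ≤ t₀ → φ i t ≤ h i t)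
    (hφr : ∀ i t, t₀ < t → φ i t ≤ h i t + ∑ γ ∈ P i, p γ * φ (τ i γ) (t - l γ))
    {v : V → ℝ≥0∞} (hv0 : ∀ i, v i ≠ 0) (hvt : ∀ i, v i ≠ ⊤) {θ : ℝ≥0∞} (hθ : θ < 1)
    (hsub : ∀ i, ∑ γ ∈ P i, p γ * v (τ i γ) ≤ θ * v i) (i : V) :
    ∫⁻ t in Ioi (0 : ℝ), φ i t < ⊤ := by
  set g := renewalIterate P τ p l t₀ h with hg
  have hgm := measurable_renewalIterate P τ p l t₀ hh
  have hdom : ∀ (k : ℕ) i t, 0 < t → t ≤ t₀ + k * c → φ i t ≤ g k i t := by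
    intro k
    induction k with
    | zero => intro i t h1 h2; exact hφ i t h1 (by simpa using h2)
    | succ k ih =>
      intro i t h1 h2
      by_cases h3 : t ≤ t₀
      · exact (hφ i t h1 h3).trans le_self_add
      · rw [not_le] at h3
        refine (hφr i t h3).trans (add_le_add le_rfl (Finset.sum_le_sum fun γ hγ => ?_))
        obtain ⟨h4, h5⟩ := hl i γ hγ
        rw [indicator_of_mem (mem_Ioi.2 h3)]
        refine mul_le_mul_right (ih _ _ (by linarith) ?_) _
        push_cast at h2; linarith
  have hθ0 : 1 - θ ≠ 0 := (tsub_pos_of_lt hθ).ne'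
  have hθt : 1 - θ ≠ ⊤ := (tsub_le_self.trans_lt ENNReal.one_lt_top).ne
  set R : ℝ≥0∞ := ∑ j, (∫⁻ t in Ioi (0 : ℝ), h j t) / ((1 - θ) * v j)
  have hRt : R < ⊤ := ENNReal.sum_lt_top.2 fun j _ =>
    ENNReal.div_lt_top (hhint j).ne (mul_ne_zero hθ0 (hv0 j))
  have hH : ∀ j, ∫⁻ t in Ioi (0 : ℝ), h j t ≤ (1 - θ) * v j * R := fun j => by
    calc ∫⁻ t in Ioi (0 : ℝ), h j t
        = (1 - θ) * v j * ((∫⁻ t in Ioi (0 : ℝ), h j t) / ((1 - θ) * v j)) :=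
          (ENNReal.mul_div_cancel (mul_ne_zero hθ0 (hv0 j)) (ENNReal.mul_ne_top hθt (hvt j))).symm
      _ ≤ _ := by
          gcongr
          exact Finset.single_le_sum
            (f := fun j => (∫⁻ t in Ioi (0 : ℝ), h j t) / ((1 - θ) * v j))
            (fun _ _ => zero_le) (Finset.mem_univ j)
  have hbd : ∀ k i, ∫⁻ t in Ioi (0 : ℝ), g k i t ≤ v i * R := by
    intro k
    induction k with
    | zero =>
      intro i
      refine (hH i).trans ?_
      calc (1 - θ) * v i * R ≤ 1 * v i * R := by gcongr; exact tsub_le_self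
        _ = v i * R := by rw [one_mul]
    | succ k ih =>
      intro i
      have hmeas : ∀ γ, Measurable ((Ioi t₀).indicator fun t => g k (τ i γ) (t - l γ)) := fun γ =>
        ((hgm k (τ i γ)).comp (measurable_id.sub_const _)).indicator measurableSet_Ioi
      calc ∫⁻ t in Ioi (0 : ℝ), g (k + 1) i t
          = (∫⁻ t in Ioi (0 : ℝ), h i t) + ∑ γ ∈ P i, p γ * ∫⁻ t in Ioi (0 : ℝ),
              (Ioi t₀).indicator (fun t => g k (τ i γ) (t - l γ)) t := by
            simp only [hg, renewalIterate]
            rw [lintegral_add_left (hh i), lintegral_finsetSum _ fun γ _ => (hmeas γ).const_mul _]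
            simp_rw [← hg]
            congr 1
            exact Finset.sum_congr rfl fun γ _ => lintegral_const_mul _ (hmeas γ)
        _ ≤ (1 - θ) * v i * R + ∑ γ ∈ P i, p γ * (v (τ i γ) * R) := by
            refine add_le_add (hH i) (Finset.sum_le_sum fun γ hγ => mul_le_mul_right ?_ _)
            exact (setLIntegral_indicator_sub_le (hl i γ hγ).2 ht₀).trans (ih _)
        _ = (1 - θ) * v i * R + (∑ γ ∈ P i, p γ * v (τ i γ)) * R := by
            rw [Finset.sum_mul]; simp_rw [mul_assoc]
        _ ≤ (1 - θ) * v i * R + θ * v i * R := by gcongr; exact hsub i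
        _ = v i * R := by
            rw [mul_assoc, mul_assoc, ← add_mul, tsub_add_cancel_of_le hθ.le, one_mul]
  calc ∫⁻ t in Ioi (0 : ℝ), φ i t
      ≤ ∫⁻ t in Ioi (0 : ℝ), liminf (fun k => g k i t) atTop := by
        refine setLIntegral_mono' measurableSet_Ioi fun t ht => ?_
        refine le_liminf_of_le (by isBoundedDefault) ?_
        obtain ⟨k₀, hk₀⟩ := exists_nat_ge ((t - t₀) / c)
        filter_upwards [eventually_ge_atTop k₀] with k hk
        refine hdom k i t ht ?_
        have h1 : (t - t₀) / c ≤ k := hk₀.trans (by exact_mod_cast hk)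
        rw [div_le_iff₀ hc] at h1
        linarith
    _ ≤ liminf (fun k => ∫⁻ t in Ioi (0 : ℝ), g k i t) atTop :=
        lintegral_liminf_le fun k => hgm k i
    _ ≤ v i * R := liminf_le_of_frequently_le' (Frequently.of_forall fun k => hbd k i)
    _ < ⊤ := ENNReal.mul_lt_top (hvt i).lt_top hRt

end Renewal

namespace MWGraph

section Weights

variable {d : ℕ} {V E : Type} [Fintype V] [Fintype E] [DecidableEq V] (G : MWGraph d V E)

lemma mulVec_Amatrix (s : ℝ) (v : V → ℝ) (i : V) :
    (G.Amatrix s).mulVec v i = ∑ e with G.init e = i, G.r e ^ s * v (G.term e) := by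
  simp only [Matrix.mulVec, dotProduct, Amatrix, Matrix.of_apply, Finset.sum_mul]
  rw [Finset.sum_comm, Finset.sum_filter]
  refine Finset.sum_congr rfl fun e _ => ?_
  by_cases h : G.init e = i <;> simp [h]

/-- For a strongly connected graph there is a positive vector that is subinvariant under
`A_G^{s₀}`. -/
lemma exists_pos_subinvariant [Nonempty V] (hSC : G.StronglyConnected) {s : ℝ} (hs : IsS0 G s) :
    ∃ v : V → ℝ, (∀ i, 0 < v i) ∧
      ∀ i, ∑ e with G.init e = i, G.r e ^ s * v (G.term e) ≤ v i := by
  have hA : ∀ i j, 0 ≤ G.Amatrix s i j := fun i j => Finset.sum_nonneg fun e _ => by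
    split_ifs
    exacts [Real.rpow_nonneg (G.r_pos e).le _, le_rfl]
  obtain ⟨v, ⟨hv0, hv1⟩, hAv⟩ := exists_mem_stdSimplex_mulVec_le hA hs.2.le
  simp only [mulVec_Amatrix] at hAv
  refine ⟨v, fun i => ?_, hAv⟩
  obtain ⟨j, hj⟩ : ∃ j, 0 < v j := by
    by_contra! h
    linarith [Finset.sum_nonpos fun j (_ : j ∈ Finset.univ) => h j]
  have key : ∀ (γ : List E) (i : V), G.IsPathFrom i γ → G.pathTerm i γ = j → 0 < v i := by
    intro γ
    induction γ with
    | nil => rintro i - rfl; exact hj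
    | cons e γ ih =>
      rintro i ⟨rfl, hγ⟩ ht
      refine lt_of_lt_of_le (mul_pos (Real.rpow_pos_of_pos (G.r_pos e) s) (ih _ hγ ht))
        (le_trans ?_ (hAv _))
      exact Finset.single_le_sum (f := fun e => G.r e ^ s * v (G.term e))
        (fun e _ => mul_nonneg (Real.rpow_nonneg (G.r_pos e).le _) (hv0 _)) (by simp)
  obtain ⟨γ, -, hγ, ht⟩ := hSC i j
  exact key γ i hγ ht

end Weights

variable {d : ℕ} {V E : Type} [Fintype V] [Fintype E] (G : MWGraph d V E)

section Paths

open scoped Classical in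
/-- The directed paths of length `n` that start at `i`. -/
def pathsOfLength : ℕ → V → Finset (List E)
  | 0, _ => {[]}
  | n + 1, i => ({e : E | G.init e = i} : Finset E).biUnion fun e =>
      (pathsOfLength n (G.term e)).image (List.cons e)

lemma mem_pathsOfLength_succ {n : ℕ} {i : V} {γ : List E} :
    γ ∈ G.pathsOfLength (n + 1) i ↔
      ∃ e γ', G.init e = i ∧ γ' ∈ G.pathsOfLength n (G.term e) ∧ e :: γ' = γ := by
  simp [pathsOfLength]

lemma sum_pathsOfLength_succ {M : Type*} [AddCommMonoid M] [DecidableEq V] (n : ℕ) (i : V)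
    (f : List E → M) :
    ∑ γ ∈ G.pathsOfLength (n + 1) i, f γ =
      ∑ e with G.init e = i, ∑ γ ∈ G.pathsOfLength n (G.term e), f (e :: γ) := by
  classical
  rw [pathsOfLength, Finset.sum_biUnion]
  · refine Finset.sum_congr (by ext; simp) fun e _ => ?_
    rw [Finset.sum_image fun _ _ _ _ h => List.tail_eq_of_cons_eq h]
  · intro e _ e' _ hne
    rw [Function.onFun, Finset.disjoint_left]
    intro γ h h'
    obtain ⟨_, _, rfl⟩ := Finset.mem_image.1 h
    obtain ⟨_, _, h''⟩ := Finset.mem_image.1 h'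
    exact hne (List.head_eq_of_cons_eq h'').symm

@[simp] lemma pathRatio_nil : G.pathRatio [] = 1 := by simp [pathRatio]

@[simp] lemma pathRatio_cons (e : E) (γ : List E) :
    G.pathRatio (e :: γ) = G.r e * G.pathRatio γ := by simp [pathRatio]

lemma pathRatio_pos (γ : List E) : 0 < G.pathRatio γ := by
  induction γ with
  | nil => simp
  | cons e γ ih => simpa using mul_pos (G.r_pos e) ih

lemma dist_pathMap (γ : List E) (x y : Pt d) :
    dist (G.pathMap γ x) (G.pathMap γ y) = G.pathRatio γ * dist x y := by
  induction γ with
  | nil => simp [pathMap]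
  | cons e γ ih => simp [pathMap, G.S_sim, ih, mul_assoc]

lemma pathRatio_le_pow {b : ℝ} (hb : ∀ e, G.r e ≤ b) {n : ℕ} {i : V} {γ : List E}
    (hγ : γ ∈ G.pathsOfLength n i) : G.pathRatio γ ≤ b ^ n := by
  induction n generalizing i γ with
  | zero => simp [Finset.mem_singleton.1 hγ]
  | succ n ih =>
    obtain ⟨e, γ', -, hγ', rfl⟩ := G.mem_pathsOfLength_succ.1 hγ
    rw [pathRatio_cons, pow_succ']
    exact mul_le_mul (hb e) (ih hγ') (G.pathRatio_pos _).le ((G.r_pos e).le.trans (hb e))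

lemma pow_le_pathRatio {b : ℝ} (hb0 : 0 ≤ b) (hb : ∀ e, b ≤ G.r e) {n : ℕ} {i : V} {γ : List E}
    (hγ : γ ∈ G.pathsOfLength n i) : b ^ n ≤ G.pathRatio γ := by
  induction n generalizing i γ with
  | zero => simp [Finset.mem_singleton.1 hγ]
  | succ n ih =>
    obtain ⟨e, γ', -, hγ', rfl⟩ := G.mem_pathsOfLength_succ.1 hγ
    rw [pathRatio_cons, pow_succ']
    exact mul_le_mul (hb e) (ih hγ') (pow_nonneg hb0 n) (G.r_pos e).le

lemma sum_pathsOfLength_le [DecidableEq V] {s : ℝ} {v : V → ℝ}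
    (hv : ∀ i, ∑ e with G.init e = i, G.r e ^ s * v (G.term e) ≤ v i) (n : ℕ) (i : V) :
    ∑ γ ∈ G.pathsOfLength n i, G.pathRatio γ ^ s * v (G.pathTerm i γ) ≤ v i := by
  induction n generalizing i with
  | zero => simp [pathsOfLength, pathTerm]
  | succ n ih =>
    rw [sum_pathsOfLength_succ]
    refine (Finset.sum_le_sum fun e _ => ?_).trans (hv i)
    calc ∑ γ ∈ G.pathsOfLength n (G.term e),
          G.pathRatio (e :: γ) ^ s * v (G.pathTerm i (e :: γ))
        = G.r e ^ s * ∑ γ ∈ G.pathsOfLength n (G.term e),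
            G.pathRatio γ ^ s * v (G.pathTerm (G.term e) γ) := by
          rw [Finset.mul_sum]
          refine Finset.sum_congr rfl fun γ _ => ?_
          rw [pathRatio_cons, Real.mul_rpow (G.r_pos e).le (G.pathRatio_pos γ).le, mul_assoc]
          rfl
      _ ≤ _ := mul_le_mul_of_nonneg_left (ih _) (Real.rpow_nonneg (G.r_pos e).le _)

end Paths

section Attractors

variable {G} {C K KC U : V → Set (Pt d)}

lemma IsAttractor.exists_mem_pathMap_image (hK : G.IsAttractor K) (n : ℕ) {i : V} {x : Pt d}
    (hx : x ∈ K i) : ∃ γ ∈ G.pathsOfLength n i, x ∈ G.pathMap γ '' K (G.pathTerm i γ) := by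
  induction n generalizing i x with
  | zero => exact ⟨[], by simp [pathsOfLength], x, hx, rfl⟩
  | succ n ih =>
    rw [hK.2.2 i] at hx
    obtain ⟨e, he, y, hy, rfl⟩ := mem_iUnion₂.1 hx
    obtain ⟨γ, hγ, z, hz, rfl⟩ := ih hy
    exact ⟨e :: γ, G.mem_pathsOfLength_succ.2 ⟨e, γ, he, hγ, rfl⟩, z, hz, rfl⟩

/-- Decomposition of a point of the inhomogeneous attractor after `n` steps. -/
lemma IsInhomAttractor.exists_mem_pathMap_image (hKC : G.IsInhomAttractor C KC) (n : ℕ) {i : V}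
    {x : Pt d} (hx : x ∈ KC i) :
    (∃ m < n, ∃ γ ∈ G.pathsOfLength m i, x ∈ G.pathMap γ '' C (G.pathTerm i γ)) ∨
      ∃ γ ∈ G.pathsOfLength n i, x ∈ G.pathMap γ '' KC (G.pathTerm i γ) := by
  induction n generalizing i x with
  | zero => exact .inr ⟨[], by simp [pathsOfLength], x, hx, rfl⟩
  | succ n ih =>
    rw [hKC.2.2 i] at hx
    rcases hx with hx | hx
    · obtain ⟨e, he, y, hy, rfl⟩ := mem_iUnion₂.1 hx
      rcases ih hy with ⟨m, hm, γ, hγ, z, hz, rfl⟩ | ⟨γ, hγ, z, hz, rfl⟩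
      · exact .inl ⟨m + 1, by omega, e :: γ, G.mem_pathsOfLength_succ.2 ⟨e, γ, he, hγ, rfl⟩,
          z, hz, rfl⟩
      · exact .inr ⟨e :: γ, G.mem_pathsOfLength_succ.2 ⟨e, γ, he, hγ, rfl⟩, z, hz, rfl⟩
    · exact .inl ⟨0, n.succ_pos, [], by simp [pathsOfLength], x, hx, rfl⟩

lemma IsInhomAttractor.pathMap_mem (hKC : G.IsInhomAttractor C KC) {n : ℕ} {i : V} {γ : List E}
    (hγ : γ ∈ G.pathsOfLength n i) {y : Pt d} (hy : y ∈ KC (G.pathTerm i γ)) :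
    G.pathMap γ y ∈ KC i := by
  induction n generalizing i γ with
  | zero => obtain rfl := Finset.mem_singleton.1 hγ; exact hy
  | succ n ih =>
    obtain ⟨e, γ', he, hγ', rfl⟩ := G.mem_pathsOfLength_succ.1 hγ
    rw [hKC.2.2 i]
    exact .inl (mem_iUnion₂.2 ⟨e, he, _, ih hγ' hy, rfl⟩)

lemma IsOSCWith.image_subset (hU : G.IsOSCWith U) (e : E) :
    G.S e '' U (G.term e) ⊆ U (G.init e) :=
  (subset_biUnion_of_mem (u := fun e => G.S e '' U (G.term e)) (x := e)
    (s := {e' | G.init e' = G.init e}) rfl).trans (hU.2.2.2.2.1 _)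

lemma exists_ratio_bounds :
    ∃ a b : ℝ, 0 < a ∧ 0 < b ∧ b < 1 ∧ a < 1 ∧ ∀ e, a ≤ G.r e ∧ G.r e ≤ b := by
  rcases isEmpty_or_nonempty E with h | h
  · exact ⟨1 / 2, 1 / 2, by norm_num, by norm_num, by norm_num, by norm_num, fun e => h.elim e⟩
  · obtain ⟨e, he⟩ := Finite.exists_min G.r
    obtain ⟨e', he'⟩ := Finite.exists_max G.r
    exact ⟨G.r e, G.r e', G.r_pos e, G.r_pos e', G.r_lt_one e', G.r_lt_one e,
      fun x => ⟨he x, he' x⟩⟩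

lemma IsInhomAttractor.subset_closure (hKC : G.IsInhomAttractor C KC) (hU : G.IsOSCWith U)
    (hCU : ∀ i, C i ⊆ closure (U i)) (i : V) : KC i ⊆ closure (U i) := by
  obtain ⟨a, b, -, hb0, hb1, -, hb⟩ := G.exists_ratio_bounds
  obtain ⟨D, hD0, hD⟩ : ∃ D : ℝ, 0 ≤ D ∧ ∀ i, ∀ x ∈ KC i, infDist x (U i) ≤ D := by
    have : ∀ i, ∃ D : ℝ, 0 ≤ D ∧ ∀ x ∈ KC i, infDist x (U i) ≤ D := fun i => by
      obtain ⟨x, hx, hmax⟩ := (hKC.1 i).exists_isMaxOn (hKC.2.1 i)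
        (continuous_infDist_pt (U i)).continuousOn
      exact ⟨infDist x (U i), infDist_nonneg, hmax⟩
    choose D hD0 hD using this
    exact ⟨∑ j, D j, Finset.sum_nonneg fun j _ => hD0 j, fun i x hx => (hD i x hx).trans
      (Finset.single_le_sum (fun j _ => hD0 j) (Finset.mem_univ i))⟩
  have key : ∀ n i, ∀ x ∈ KC i, infDist x (U i) ≤ b ^ n * D := by
    intro n
    induction n with
    | zero => simpa using hD
    | succ n ih =>
      intro i x hx
      rw [hKC.2.2 i] at hx
      rcases hx with hx | hx
      · obtain ⟨e, rfl, y, hy, rfl⟩ := mem_iUnion₂.1 hx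
        refine le_of_forall_pos_le_add fun ε hε => ?_
        obtain ⟨z, hz, hyz⟩ := (infDist_lt_iff (hU.1 (G.term e))).1
          (lt_of_le_of_lt (ih _ y hy) (lt_add_of_pos_right _ hε))
        calc infDist (G.S e y) (U (G.init e)) ≤ dist (G.S e y) (G.S e z) :=
              infDist_le_dist_of_mem (hU.image_subset e ⟨z, hz, rfl⟩)
          _ = G.r e * dist y z := G.S_sim e y z
          _ ≤ b * (b ^ n * D + ε) := mul_le_mul (hb e).2 hyz.le dist_nonneg hb0.le
          _ ≤ b ^ (n + 1) * D + ε := by rw [pow_succ']; nlinarith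
      · have h0 := (mem_closure_iff_infDist_zero (hU.1 i)).1 (hCU i hx)
        rw [h0]; positivity
  intro x hx
  rw [mem_closure_iff_infDist_zero (hU.1 i)]
  have hlim := (tendsto_pow_atTop_nhds_zero_of_lt_one hb0.le hb1).mul_const D
  rw [zero_mul] at hlim
  exact le_antisymm (ge_of_tendsto' hlim fun n => key n i x hx) infDist_nonneg

lemma IsOSCWith.isCompact_frontier (hU : G.IsOSCWith U) (i : V) : IsCompact (frontier (U i)) :=
  (hU.2.2.1 i).isCompact_closure.of_isClosed_subset isClosed_frontier frontier_subset_closure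

lemma IsOSCWith.exists_dist_le_of_mem_cthickening (hU : G.IsOSCWith U) {i : V} {δ : ℝ}
    (hδ : 0 ≤ δ) {x : Pt d} (hx : x ∈ cthickening δ (frontier (U i))) :
    ∃ z ∈ frontier (U i), dist x z ≤ δ := by
  rw [(hU.isCompact_frontier i).cthickening_eq_biUnion_closedBall hδ] at hx
  simpa using hx

lemma IsOSCWith.notMem_of_mem_frontier (hU : G.IsOSCWith U) {i : V} {z : Pt d}
    (hz : z ∈ frontier (U i)) : z ∉ U i := by
  rw [(hU.2.1 i).frontier_eq] at hz
  exact hz.2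

lemma IsOSCWith.mem_cthickening_of_S (hU : G.IsOSCWith U) (e : E) {δ : ℝ} (hδ : 0 ≤ δ) {y : Pt d}
    (hy : y ∈ closure (U (G.term e)))
    (h : G.S e y ∈ cthickening δ (frontier (U (G.init e)))) :
    y ∈ cthickening (δ / G.r e) (frontier (U (G.term e))) := by
  obtain ⟨z, hz, hyz⟩ := hU.exists_dist_le_of_mem_cthickening hδ h
  obtain ⟨w, rfl⟩ := surjective_of_dist_eq_mul (G.r_pos e) (G.S_sim e) z
  have hw : w ∉ U (G.term e) := fun hw =>
    hU.notMem_of_mem_frontier hz (hU.image_subset e ⟨w, hw, rfl⟩)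
  obtain ⟨p, hp, hyp⟩ := exists_mem_frontier_dist_le hy hw
  refine mem_cthickening_of_dist_le y p _ _ hp (hyp.trans ?_)
  rwa [le_div_iff₀' (G.r_pos e), ← G.S_sim]

lemma mem_cthickening_of_pathMap (hKC : G.IsInhomAttractor C KC) (hU : G.IsOSCWith U)
    (hCU : ∀ i, C i ⊆ closure (U i)) {n : ℕ} {i : V} {γ : List E}
    (hγ : γ ∈ G.pathsOfLength n i) {δ : ℝ} (hδ : 0 ≤ δ) {y : Pt d}
    (hy : y ∈ KC (G.pathTerm i γ)) (h : G.pathMap γ y ∈ cthickening δ (frontier (U i))) :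
    y ∈ cthickening (δ / G.pathRatio γ) (frontier (U (G.pathTerm i γ))) := by
  induction n generalizing i γ δ with
  | zero => obtain rfl := Finset.mem_singleton.1 hγ; rw [pathRatio_nil, div_one]; exact h
  | succ n ih =>
    obtain ⟨e, γ', rfl, hγ', rfl⟩ := G.mem_pathsOfLength_succ.1 hγ
    rw [pathRatio_cons, ← div_div]
    refine ih hγ' (div_nonneg hδ (G.r_pos e).le) hy (hU.mem_cthickening_of_S e hδ ?_ h)
    exact hKC.subset_closure hU hCU _ (hKC.pathMap_mem hγ' hy)

/-- Under the strong open set condition, from every vertex there starts a path of a common length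
whose cylinder stays away from the boundary of the open set. -/
lemma exists_interior_paths (hK : G.IsAttractor K) (hKC : G.IsInhomAttractor C KC)
    (hU : G.IsOSCWith U) (hUK : ∀ i, (U i ∩ K i).Nonempty) :
    ∃ n ≠ 0, ∃ η : V → List E, ∃ ρ > 0, ∀ i, η i ∈ G.pathsOfLength n i ∧
      ∀ y ∈ KC (G.pathTerm i (η i)), ∀ δ, 0 ≤ δ → δ < ρ →
        G.pathMap (η i) y ∉ cthickening δ (frontier (U i)) := by
  obtain ⟨a, b, -, hb0, hb1, -, hb⟩ := G.exists_ratio_bounds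
  choose x hxU hxK using hUK
  obtain ⟨D, hD⟩ : ∃ D : ℝ, ∀ i, ∀ y ∈ KC i, ∀ z ∈ K i, dist y z ≤ D := by
    have hbd : Bornology.IsBounded (⋃ i, KC i ∪ K i) :=
      Bornology.isBounded_iUnion.2 fun i => (hKC.1 i).isBounded.union (hK.1 i).isBounded
    obtain ⟨D, hD⟩ := Metric.isBounded_iff.1 hbd
    exact ⟨D, fun i y hy z hz => hD (mem_iUnion.2 ⟨i, .inl hy⟩) (mem_iUnion.2 ⟨i, .inr hz⟩)⟩
  obtain ⟨ρ, hρ0, hρ⟩ : ∃ ρ > 0, ∀ i, ball (x i) (ρ + ρ) ⊆ U i := by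
    have h : ∀ i, ∀ᶠ ε in 𝓝[>] (0 : ℝ), ball (x i) (ε + ε) ⊆ U i := fun i => by
      obtain ⟨ε, hε, hball⟩ := Metric.isOpen_iff.1 (hU.2.1 i) _ (hxU i)
      filter_upwards [Ioo_mem_nhdsGT (half_pos hε)] with δ hδ
      exact (ball_subset_ball (by linarith [hδ.2])).trans hball
    obtain ⟨ρ, hρ, hρ0⟩ := ((eventually_all.2 h).and self_mem_nhdsWithin).exists
    exact ⟨ρ, hρ0, hρ⟩
  obtain ⟨n, hn, hn0⟩ : ∃ n : ℕ, b ^ n * D < ρ ∧ n ≠ 0 := by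
    have hlim := (tendsto_pow_atTop_nhds_zero_of_lt_one hb0.le hb1).mul_const D
    rw [zero_mul] at hlim
    exact ((hlim.eventually (gt_mem_nhds hρ0)).and (eventually_ne_atTop 0)).exists
  choose η hη z hz hηz using fun i => hK.exists_mem_pathMap_image n (hxK i)
  refine ⟨n, hn0, η, ρ, hρ0, fun i => ⟨hη i, fun y hy δ hδ hδρ hmem => ?_⟩⟩
  obtain ⟨w, hw, hyw⟩ := hU.exists_dist_le_of_mem_cthickening hδ hmem
  refine hU.notMem_of_mem_frontier hw (hρ i (mem_ball'.2 ?_))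
  have h1 : dist (x i) (G.pathMap (η i) y) ≤ b ^ n * D := by
    rw [← hηz i, dist_comm, dist_pathMap]
    exact mul_le_mul (G.pathRatio_le_pow (fun e => (hb e).2) (hη i)) (hD _ y hy _ (hz i))
      dist_nonneg (by positivity)
  linarith [dist_triangle (x i) (G.pathMap (η i) y) w]

/-- The renewal inequality for the covering numbers of the boundary parts of the inhomogeneous
attractor. -/
lemma coveringNumber_boundary_le [DecidableEq E] (hC : G.IsCondensation C)
    (hKC : G.IsInhomAttractor C KC) (hU : G.IsOSCWith U) (hCU : ∀ i, C i ⊆ closure (U i)) {n : ℕ}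
    {i : V} {η : List E} {δ : ℝ} (hδ : 0 < δ)
    (hη : ∀ y ∈ KC (G.pathTerm i η), G.pathMap η y ∉ cthickening δ (frontier (U i))) :
    coveringNumber (KC i ∩ cthickening δ (frontier (U i))) δ ≤
      ∑ m ∈ Finset.range n, ∑ γ ∈ G.pathsOfLength m i,
        coveringNumber (C (G.pathTerm i γ)) (δ / G.pathRatio γ) +
      ∑ γ ∈ (G.pathsOfLength n i).erase η,
        coveringNumber (KC (G.pathTerm i γ) ∩
          cthickening (δ / G.pathRatio γ) (frontier (U (G.pathTerm i γ))))
          (δ / G.pathRatio γ) := by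
  have himg : ∀ (A : Set (Pt d)) (γ : List E), Bornology.IsBounded A →
      Bornology.IsBounded (G.pathMap γ '' A) ∧
        coveringNumber (G.pathMap γ '' A) δ ≤ coveringNumber A (δ / G.pathRatio γ) := by
    intro A γ hA
    have hγ := G.pathRatio_pos γ
    refine ⟨(LipschitzWith.of_dist_le_mul (K := ⟨G.pathRatio γ, hγ.le⟩) fun x y =>
      (G.dist_pathMap γ x y).le).isBounded_image hA, ?_⟩
    have h := coveringNumber_image_le hA hγ (G.dist_pathMap γ) (div_pos hδ hγ)
    rwa [mul_div_cancel₀ _ hγ.ne'] at h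
  set D : List E → Set (Pt d) := fun γ => KC (G.pathTerm i γ) ∩
    cthickening (δ / G.pathRatio γ) (frontier (U (G.pathTerm i γ)))
  have hCb : ∀ γ, Bornology.IsBounded (C (G.pathTerm i γ)) := fun γ => (hC _).1.isBounded
  have hDb : ∀ γ, Bornology.IsBounded (D γ) := fun γ =>
    (hKC.1 _).isBounded.subset inter_subset_left
  have hsub : KC i ∩ cthickening δ (frontier (U i)) ⊆
      (⋃ m ∈ Finset.range n, ⋃ γ ∈ G.pathsOfLength m i, G.pathMap γ '' C (G.pathTerm i γ)) ∪
        ⋃ γ ∈ (G.pathsOfLength n i).erase η, G.pathMap γ '' D γ := by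
    rintro x ⟨hx, hxδ⟩
    rcases hKC.exists_mem_pathMap_image n hx with ⟨m, hm, γ, hγ, hxγ⟩ | ⟨γ, hγ, y, hy, rfl⟩
    · exact .inl (mem_iUnion₂.2 ⟨m, Finset.mem_range.2 hm, mem_iUnion₂.2 ⟨γ, hγ, hxγ⟩⟩)
    · refine .inr (mem_iUnion₂.2 ⟨γ, Finset.mem_erase.2 ⟨?_, hγ⟩, y, ⟨hy, ?_⟩, rfl⟩)
      · rintro rfl
        exact hη y hy hxδ
      · exact mem_cthickening_of_pathMap hKC hU hCU hγ hδ.le hy hxδ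
  have hb1 : ∀ m, Bornology.IsBounded
      (⋃ γ ∈ G.pathsOfLength m i, G.pathMap γ '' C (G.pathTerm i γ)) := fun m =>
    (Bornology.isBounded_biUnion_finset _).2 fun γ _ => (himg _ γ (hCb γ)).1
  have hb2 : Bornology.IsBounded (⋃ m ∈ Finset.range n, ⋃ γ ∈ G.pathsOfLength m i,
      G.pathMap γ '' C (G.pathTerm i γ)) :=
    (Bornology.isBounded_biUnion_finset _).2 fun m _ => hb1 m
  have hb3 : Bornology.IsBounded (⋃ γ ∈ (G.pathsOfLength n i).erase η, G.pathMap γ '' D γ) :=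
    (Bornology.isBounded_biUnion_finset _).2 fun γ _ => (himg _ γ (hDb γ)).1
  refine (coveringNumber_mono (hb2.union hb3) hδ hsub).trans
    ((coveringNumber_union_le hb2 hb3 hδ).trans (Nat.add_le_add ?_ ?_))
  · refine (coveringNumber_biUnion_le _ _ (fun m _ => hb1 m) hδ).trans
      (Finset.sum_le_sum fun m _ => ?_)
    exact (coveringNumber_biUnion_le _ _ (fun γ _ => (himg _ γ (hCb γ)).1) hδ).trans
      (Finset.sum_le_sum fun γ _ => (himg _ γ (hCb γ)).2)
  · exact (coveringNumber_biUnion_le _ _ (fun γ _ => (himg _ γ (hDb γ)).1) hδ).trans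
      (Finset.sum_le_sum fun γ _ => (himg _ γ (hDb γ)).2)

end Attractors

end MWGraph

/-- Rescaling the radius by `ρ` amounts to a translation of the logarithmic scale. -/
lemma ofReal_exp_mul_div {s ρ : ℝ} (hρ : 0 < ρ) (f : ℝ → ℕ) (t : ℝ) :
    ENNReal.ofReal (Real.exp (-s * t) * (f (Real.exp (-t) / ρ) : ℝ)) =
      ENNReal.ofReal (ρ ^ s) * ENNReal.ofReal
        (Real.exp (-s * (t - -Real.log ρ)) * (f (Real.exp (-(t - -Real.log ρ))) : ℝ)) := by
  have h1 : Real.exp (-(t - -Real.log ρ)) = Real.exp (-t) / ρ := by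
    rw [sub_neg_eq_add, neg_add, Real.exp_add, Real.exp_neg (Real.log ρ), Real.exp_log hρ,
      div_eq_mul_inv]
  rw [h1, ← ENNReal.ofReal_mul (Real.rpow_nonneg hρ.le _), ← mul_assoc,
    Real.rpow_def_of_pos hρ, ← Real.exp_add]
  congr 4
  ring

theorem stmt5 {d : ℕ} {V E : Type} [Fintype V] [Fintype E] [DecidableEq V]
    (G : MWGraph d V E) (hSC : G.StronglyConnected)
    (C K KC U : V → Set (Pt d))
    (hC : G.IsCondensation C) (hK : G.IsAttractor K) (hKC : G.IsInhomAttractor C KC)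
    (hU : G.IsOSCWith U) (hUK : ∀ i, (U i ∩ K i).Nonempty)
    (hCU : ∀ i, C i ⊆ closure (U i))
    (s0 : ℝ) (hs0 : IsS0 G s0)
    (hint : ∀ i : V, ∫⁻ t in Set.Ioi (0 : ℝ),
      ENNReal.ofReal (Real.exp (-s0 * t) * (coveringNumber (C i) (Real.exp (-t)) : ℝ)) < ⊤)
 :
    ∀ i : V, ∫⁻ t in Set.Ioi (0 : ℝ), ENNReal.ofReal (Real.exp (-s0 * t) *
      (coveringNumber (KC i ∩ Metric.cthickening (Real.exp (-t)) (frontier (U i)))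
        (Real.exp (-t)) : ℝ)) < ⊤ := by
  classical
  intro i₀
  have : Nonempty V := ⟨i₀⟩
  obtain ⟨v, hv0, hv⟩ := G.exists_pos_subinvariant hSC hs0
  obtain ⟨n, hn0, η, ρ, hρ0, hη⟩ := MWGraph.exists_interior_paths hK hKC hU hUK
  obtain ⟨a, b, ha0, hb0, hb1, ha1, hab⟩ := G.exists_ratio_bounds
  -- the threshold scale
  obtain ⟨κ, hκ0, hκρ, hκa⟩ : ∃ κ > 0, κ ≤ ρ ∧ κ ≤ a ^ n :=
    ⟨min ρ (a ^ n), lt_min hρ0 (pow_pos ha0 n), min_le_left _ _, min_le_right _ _⟩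
  have hκ1 : κ ≤ 1 := hκa.trans (pow_le_one₀ ha0.le ha1.le)
  set t₀ : ℝ := -Real.log κ
  have ht₀0 : 0 ≤ t₀ := neg_nonneg.2 (Real.log_nonpos hκ0.le hκ1)
  have hdelay : ∀ m ≤ n, ∀ i, ∀ γ ∈ G.pathsOfLength m i, -Real.log (G.pathRatio γ) ≤ t₀ := by
    intro m hm i γ hγ
    refine neg_le_neg (Real.log_le_log hκ0 (hκa.trans ?_))
    exact (pow_le_pow_of_le_one ha0.le ha1.le hm).trans
      (G.pow_le_pathRatio ha0.le (fun e => (hab e).1) hγ)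
  -- the renewal data
  set p : List E → ENNReal := fun γ => ENNReal.ofReal (G.pathRatio γ ^ s0) with hp
  set l : List E → ℝ := fun γ => -Real.log (G.pathRatio γ)
  set P : V → Finset (List E) := fun i => (G.pathsOfLength n i).erase (η i)
  set ψ : V → ℝ → ENNReal := fun i t =>
    ENNReal.ofReal (Real.exp (-s0 * t) * (coveringNumber (C i) (Real.exp (-t)) : ℝ))
  set φ : V → ℝ → ENNReal := fun i t => ENNReal.ofReal (Real.exp (-s0 * t) *
    (coveringNumber (KC i ∩ cthickening (Real.exp (-t)) (frontier (U i)))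
      (Real.exp (-t)) : ℝ)) with hφ
  set M : V → ENNReal := fun i => (coveringNumber (KC i) (Real.exp (-t₀)) : ENNReal) with hM
  set h : V → ℝ → ENNReal := fun i t => (Iic t₀).indicator (fun _ => M i) t +
    ∑ m ∈ Finset.range n, ∑ γ ∈ G.pathsOfLength m i,
      p γ * (Ioi t₀).indicator (fun t => ψ (G.pathTerm i γ) (t - l γ)) t with hh
  have hψm : ∀ i, Measurable (ψ i) := fun i => by
    have := measurable_coveringNumber_exp_neg (hC i).1.isBounded
    exact ((by fun_prop : Measurable fun t : ℝ => Real.exp (-s0 * t)).mul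
      (measurable_from_top.comp this)).ennreal_ofReal
  have hconst : ∀ i, Measurable ((Iic t₀).indicator fun _ : ℝ => M i) := fun i =>
    measurable_const.indicator measurableSet_Iic
  have hshift : ∀ i γ,
      Measurable ((Ioi t₀).indicator fun t => ψ (G.pathTerm i γ) (t - l γ)) := fun i γ =>
    ((hψm _).comp (measurable_id.sub_const _)).indicator measurableSet_Ioi
  have hhm : ∀ i, Measurable (h i) := fun i =>
    (hconst i).add (Finset.measurable_sum _ fun m _ => Finset.measurable_sum _ fun γ _ =>
      (hshift i γ).const_mul _)
  have hhint : ∀ i, ∫⁻ t in Ioi (0 : ℝ), h i t < ⊤ := fun i => by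
    simp only [hh]
    rw [lintegral_add_left (hconst i), lintegral_finsetSum _ fun m _ =>
      Finset.measurable_sum _ fun γ _ => (hshift i γ).const_mul _]
    refine ENNReal.add_lt_top.2 ⟨?_, ENNReal.sum_lt_top.2 fun m hm => ?_⟩
    · rw [lintegral_indicator_const measurableSet_Iic, Measure.restrict_apply measurableSet_Iic,
        Iic_inter_Ioi, Real.volume_Ioc]
      exact ENNReal.mul_lt_top (ENNReal.natCast_lt_top _) ENNReal.ofReal_lt_top
    · rw [lintegral_finsetSum _ fun γ _ => (hshift i γ).const_mul _]
      refine ENNReal.sum_lt_top.2 fun γ hγ => ?_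
      rw [lintegral_const_mul _ (hshift i γ)]
      refine ENNReal.mul_lt_top ENNReal.ofReal_lt_top (lt_of_le_of_lt ?_ (hint (G.pathTerm i γ)))
      exact setLIntegral_indicator_sub_le
        (hdelay m (Finset.mem_range.1 hm).le i γ hγ) ht₀0
  have hφle : ∀ i t, 0 < t → t ≤ t₀ → φ i t ≤ h i t := by
    intro i t ht htt
    refine le_trans ?_ le_self_add
    rw [indicator_of_mem (mem_Iic.2 htt)]
    simp only [hM]
    rw [← ENNReal.ofReal_natCast]
    refine ENNReal.ofReal_le_ofReal ?_
    have h1 : Real.exp (-s0 * t) ≤ 1 := Real.exp_le_one_iff.2 (by nlinarith [hs0.1])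
    have h2 : coveringNumber (KC i ∩ cthickening (Real.exp (-t)) (frontier (U i)))
        (Real.exp (-t)) ≤ coveringNumber (KC i) (Real.exp (-t₀)) :=
      (coveringNumber_mono (hKC.1 i).isBounded (Real.exp_pos _) inter_subset_left).trans
        (coveringNumber_anti (hKC.1 i).isBounded (Real.exp_pos _)
          (Real.exp_le_exp.2 (neg_le_neg htt)))
    calc _ ≤ (1 : ℝ) * (coveringNumber (KC i) (Real.exp (-t₀)) : ℝ) :=
          mul_le_mul h1 (by exact_mod_cast h2) (Nat.cast_nonneg _) zero_le_one
      _ = _ := one_mul _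
  have hφr : ∀ i t, t₀ < t →
      φ i t ≤ h i t + ∑ γ ∈ P i, p γ * φ (G.pathTerm i γ) (t - l γ) := by
    intro i t ht
    have hexp : Real.exp (-t) < ρ := by
      refine lt_of_lt_of_le ?_ hκρ
      rw [← Real.exp_log hκ0, Real.exp_lt_exp]
      linarith
    have hcov := MWGraph.coveringNumber_boundary_le (n := n) hC hKC hU hCU (Real.exp_pos (-t))
      fun y hy => (hη i).2 y hy _ (Real.exp_pos _).le hexp
    have hψe : ∀ γ, p γ * ψ (G.pathTerm i γ) (t - l γ) = ENNReal.ofReal (Real.exp (-s0 * t) *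
        (coveringNumber (C (G.pathTerm i γ)) (Real.exp (-t) / G.pathRatio γ) : ℝ)) := fun γ =>
      (ofReal_exp_mul_div (G.pathRatio_pos γ)
        (fun δ => coveringNumber (C (G.pathTerm i γ)) δ) t).symm
    have hφe : ∀ γ, p γ * φ (G.pathTerm i γ) (t - l γ) = ENNReal.ofReal (Real.exp (-s0 * t) *
        (coveringNumber (KC (G.pathTerm i γ) ∩ cthickening (Real.exp (-t) / G.pathRatio γ)
          (frontier (U (G.pathTerm i γ)))) (Real.exp (-t) / G.pathRatio γ) : ℝ)) := fun γ =>
      (ofReal_exp_mul_div (G.pathRatio_pos γ) (fun δ => coveringNumber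
        (KC (G.pathTerm i γ) ∩ cthickening δ (frontier (U (G.pathTerm i γ)))) δ) t).symm
    simp only [hh]
    rw [indicator_of_notMem (by simpa using ht), zero_add]
    simp only [indicator_of_mem (mem_Ioi.2 ht), hψe, hφe]
    have hpos : ∀ k : ℕ, 0 ≤ Real.exp (-s0 * t) * (k : ℝ) := fun k => by positivity
    simp only [hφ]
    rw [← ENNReal.ofReal_sum_of_nonneg fun γ _ => hpos _]
    simp_rw [← ENNReal.ofReal_sum_of_nonneg fun γ _ => hpos _]
    rw [← ENNReal.ofReal_sum_of_nonneg fun m _ => Finset.sum_nonneg fun γ _ => hpos _,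
      ← ENNReal.ofReal_add (Finset.sum_nonneg fun m _ => Finset.sum_nonneg fun γ _ => hpos _)
        (Finset.sum_nonneg fun γ _ => hpos _)]
    refine ENNReal.ofReal_le_ofReal ?_
    simp_rw [← Finset.mul_sum]
    rw [← mul_add]
    exact mul_le_mul_of_nonneg_left (by exact_mod_cast hcov) (Real.exp_pos _).le
  -- strict subinvariance once the interior paths are removed
  have hlt : ∀ i, ∑ γ ∈ P i, G.pathRatio γ ^ s0 * v (G.pathTerm i γ) < v i := fun i => by
    have h1 := G.sum_pathsOfLength_le hv n i
    rw [← Finset.sum_erase_add _ _ (hη i).1] at h1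
    have h2 : 0 < G.pathRatio (η i) ^ s0 * v (G.pathTerm i (η i)) :=
      mul_pos (Real.rpow_pos_of_pos (G.pathRatio_pos _) _) (hv0 _)
    linarith
  obtain ⟨θ, hθ0, hθ1, hθ⟩ : ∃ θ : ℝ, 0 ≤ θ ∧ θ < 1 ∧
      ∀ i, ∑ γ ∈ P i, G.pathRatio γ ^ s0 * v (G.pathTerm i γ) ≤ θ * v i := by
    obtain ⟨j, hj⟩ := Finite.exists_max fun i =>
      (∑ γ ∈ P i, G.pathRatio γ ^ s0 * v (G.pathTerm i γ)) / v i
    refine ⟨_, div_nonneg (Finset.sum_nonneg fun γ _ => ?_) (hv0 j).le,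
      (div_lt_one (hv0 j)).2 (hlt j), fun i => (div_le_iff₀ (hv0 i)).1 (hj i)⟩
    exact mul_nonneg (Real.rpow_nonneg (G.pathRatio_pos γ).le _) (hv0 _).le
  refine lintegral_lt_top_of_renewal (P := P) (τ := G.pathTerm) (p := p) (l := l) ht₀0
    (c := -Real.log b) (neg_pos.2 (Real.log_neg hb0 hb1)) (fun i γ hγ => ⟨?_, ?_⟩) hhm hhint
    hφle hφr (v := fun i => ENNReal.ofReal (v i))
    (fun i => (ENNReal.ofReal_pos.2 (hv0 i)).ne') (fun i => ENNReal.ofReal_ne_top)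
    (θ := ENNReal.ofReal θ) (by simpa using hθ1) (fun i => ?_) i₀
  · refine neg_le_neg (Real.log_le_log (G.pathRatio_pos γ) ?_)
    exact (G.pathRatio_le_pow (fun e => (hab e).2) (Finset.mem_of_mem_erase hγ)).trans
      (pow_le_of_le_one hb0.le hb1.le hn0)
  · exact hdelay n le_rfl i γ (Finset.mem_of_mem_erase hγ)
  · have hnn : ∀ γ, 0 ≤ G.pathRatio γ ^ s0 := fun γ => Real.rpow_nonneg (G.pathRatio_pos γ).le _
    simp only [hp]
    simp_rw [← ENNReal.ofReal_mul (hnn _)]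
    rw [← ENNReal.ofReal_sum_of_nonneg fun γ _ => mul_nonneg (hnn γ) (hv0 _).le,
      ← ENNReal.ofReal_mul hθ0]
    exact ENNReal.ofReal_le_ofReal (hθ i)
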